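/- Let x ∈ L(ℝ), extended by x_{ii} = 0, and define for each pair of distinct vertices p, q the number u_{pq} = x_{q−1,p−1} + x_{pq} − x_{p,q−1} − x_{p−1,q} (vertex labels modulo N), and u_{pp} = 0. Then the symmetric matrix u = (u_{pq}) is an A-lamination over ℝ: u_{pq} ≥ 0 for every diagonal {pq}; if u_{pq} > 0 for a diagonal {pq} then u_{ij} = 0 for every segment {ij} crossing {pq}; and R_p(u) = 0 for every vertex p. Moreover (1/2)·I_{kl}(u) = x_{kl} for every segment {kl}. -/

import Mathlib

/-!
Both parts come from reading `u` as a mixed second difference of `x`. Summing over arcs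
telescopes (`sum_rect`): the sum of `u` over a product of arcs `(a, b] × (c, d]` is
`x_{bd} - x_{bc} - x_{ad} + x_{ac}`. For `(a, b] = (c, d] = (k, l]` this gives `-2 x_{kl}`, and
since the row sums of `u` vanish, `I_{kl}(u) = 2 x_{kl}`.

Nonnegativity of `u_{pq}` on a diagonal is the Plücker relation for `p-1, p, q-1, q`, where the
two sides `{p-1, p}` and `{q-1, q}` contribute zero.

For crossing diagonals, let `a, b, c, d` be in clockwise order. The Plücker relation says that
the minimum of
`x_{ac} + x_{bd} - x_{ad} - x_{bc}` and `x_{ac} + x_{bd} - x_{ab} - x_{cd}` is zero.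
The first number is the sum of `u` over `(a, b] × (c, d]`, the second is the sum over
`(b, c] × (d, a]`; all entries in both rectangles are weights of diagonals, hence nonnegative.
So one rectangle sum vanishes, and with it each of its entries: in particular the corner `u_{bd}`
of the first or the corner `u_{ca}` of the second.
-/

open Finset

/-- Vertices `i, j` of the `(n+3)`-gon (labelled by `ZMod (n+3)`) are adjacent,
i.e. the segment `{i j}` is an edge. -/
def IsEdge (n : ℕ) (i j : ZMod (n + 3)) : Prop := i = j + 1 ∨ j = i + 1

/-- The segment `{i j}` is a diagonal of the `(n+3)`-gon. -/
def IsDiag (n : ℕ) (i j : ZMod (n + 3)) : Prop := i ≠ j ∧ ¬ IsEdge n i j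

/-- The distinct vertices `p, q, r, s` are in clockwise order. -/
def Clockwise (n : ℕ) (p q r s : ZMod (n + 3)) : Prop :=
  0 < (q - p).val ∧ (q - p).val < (r - p).val ∧ (r - p).val < (s - p).val

/-- The segments `{i j}` and `{k l}` cross: their endpoints interlace in cyclic order. -/
def Cross (n : ℕ) (i j k l : ZMod (n + 3)) : Prop :=
  Clockwise n i k j l ∨ Clockwise n i l j k

/-- `L(ℝ)`: the set of `ℝ`-tropical points of the cluster `A`-variety of type `Aₙ`
in its coordinate model: symmetric real functions on pairs of vertices, vanishing on
the diagonal and on edges, satisfying the tropical Plücker relations. -/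
structure TropPt (n : ℕ) where
  x : ZMod (n + 3) → ZMod (n + 3) → ℝ
  symm : ∀ i j, x i j = x j i
  diag_zero : ∀ i, x i i = 0
  edge_zero : ∀ i j, IsEdge n i j → x i j = 0
  pluecker : ∀ p q r s, Clockwise n p q r s →
    x p r + x q s = max (x p q + x r s) (x q r + x p s)

/-- A partial triangulation: a set of pairwise non-crossing diagonals. -/
structure PartialTri (n : ℕ) where
  diags : Finset (Sym2 (ZMod (n + 3)))
  mem_isDiag : ∀ i j, s(i, j) ∈ diags → IsDiag n i j
  noncross : ∀ i j k l, s(i, j) ∈ diags → s(k, l) ∈ diags → ¬ Cross n i j k l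

/-- The diagonal `{i j}` belongs to the supplement `S(T)`: it is not in `T` and
`T ∪ {i j}` is again a partial triangulation. -/
def InSupp (n : ℕ) (T : PartialTri n) (i j : ZMod (n + 3)) : Prop :=
  IsDiag n i j ∧ s(i, j) ∉ T.diags ∧
    ∀ k l, s(k, l) ∈ T.diags → ¬ Cross n i j k l ∧ ¬ Cross n k l i j

/-- The face `F_c^T` of a partial triangulation `T`. -/
def Face (n : ℕ) (T : PartialTri n) (c : ZMod (n + 3) → ZMod (n + 3) → ℝ) :
    Set (TropPt n) :=
  {x | (∀ i j, s(i, j) ∈ T.diags → x.x i j = c i j) ∧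
       (∀ i j, InSupp n T i j → x.x i j ≤ c i j)}

/-- The polytope `F_c^∅ = {x ∈ L(ℝ) : x_{ij} ≤ c_{ij} for all diagonals}`. -/
def TropPoly (n : ℕ) (c : ZMod (n + 3) → ZMod (n + 3) → ℝ) : Set (TropPt n) :=
  {x | ∀ i j, IsDiag n i j → x.x i j ≤ c i j}

/-- `F_c^∅` is a Stasheff polytope: faces reverse inclusions of partial triangulations. -/
def IsStasheff (n : ℕ) (c : ZMod (n + 3) → ZMod (n + 3) → ℝ) : Prop :=
  ∀ T₁ T₂ : PartialTri n, T₁.diags ⊆ T₂.diags → Face n T₂ c ⊆ Face n T₁ c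

/-- A tropicalized cluster monomial: `F(x) = Σ_{{ij}∈T} n_{ij} x_{ij}` for some complete
triangulation `T` and nonnegative integers `n_{ij}` (each unordered pair is counted once,
whence the factor `1/2` in the symmetric double sum). -/
def IsClusterMono (n : ℕ) (F : TropPt n → ℝ) : Prop :=
  ∃ (T : PartialTri n) (m : ZMod (n + 3) → ZMod (n + 3) → ℕ),
    T.diags.card = n ∧ (∀ i j, m i j = m j i) ∧
    (∀ i j, s(i, j) ∉ T.diags → m i j = 0) ∧
    ∀ x : TropPt n, F x =
      (1 / 2) * ∑ i : ZMod (n + 3), ∑ j : ZMod (n + 3), (m i j : ℝ) * x.x i j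

/-- The cyclic interval `{k+1, …, l}` of vertices (empty when `k = l`). -/
def cycInt (n : ℕ) (k l : ZMod (n + 3)) : Finset (ZMod (n + 3)) :=
  Finset.univ.filter fun v => 1 ≤ (v - k).val ∧ (v - k).val ≤ (l - k).val

/-- `I_{kl}(w) = Σ_{a∈I, b∉I} w_{ab}` where `I = {k+1,…,l}` is the cyclic interval;
in particular `I_{kk}(w) = 0`. -/
def Icyc (n : ℕ) {M : Type*} [AddCommMonoid M]
    (w : ZMod (n + 3) → ZMod (n + 3) → M) (k l : ZMod (n + 3)) : M :=
  ∑ a ∈ cycInt n k l, ∑ b ∈ (cycInt n k l)ᶜ, w a b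

/-- An `A`-lamination on the `(n+3)`-gon over `ℝ`: a symmetric real matrix with zero
diagonal, nonnegative on diagonals, no two crossing diagonals both of nonzero weight,
and all row sums `R_p` equal to zero. -/
structure Lam (n : ℕ) where
  w : ZMod (n + 3) → ZMod (n + 3) → ℝ
  symm : ∀ i j, w i j = w j i
  diag_zero : ∀ i, w i i = 0
  nonneg : ∀ i j, IsDiag n i j → 0 ≤ w i j
  noncross : ∀ i j k l, IsDiag n i j → IsDiag n k l → Cross n i j k l →
    w i j = 0 ∨ w k l = 0
  balanced : ∀ p, ∑ j, w p j = 0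

section Helpers

variable {n : ℕ}

/-! ### Cyclic order and arcs -/

/-- Subtraction in `ZMod (n + 3)` on representatives, in a form usable by linear arithmetic. -/
lemma val_sub_cases (a b : ZMod (n + 3)) :
    (b.val ≤ a.val ∧ (a - b).val + b.val = a.val) ∨
      (a.val < b.val ∧ (a - b).val + b.val = a.val + (n + 3)) := by
  rcases le_or_gt b.val a.val with h | h
  · left
    rw [ZMod.val_sub h]
    omega
  · right
    refine ⟨h, ?_⟩
    have h1 := ZMod.val_add_val_of_le (a := a - b) (b := b) (by
      by_contra hlt
      have := ZMod.val_add_of_lt (not_le.mp hlt)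
      rw [sub_add_cancel] at this
      omega)
    rwa [sub_add_cancel] at h1

lemma val_one_eq : (1 : ZMod (n + 3)).val = 1 := by
  have : Fact (1 < n + 3) := ⟨by omega⟩
  exact ZMod.val_one _

lemma clockwise_rotate {p q r s : ZMod (n + 3)} (h : Clockwise n p q r s) :
    Clockwise n q r s p := by
  obtain ⟨h1, h2, h3⟩ := h
  have e1 := val_sub_cases (r - p) (q - p)
  have e2 := val_sub_cases (s - p) (q - p)
  have e3 := val_sub_cases (p - p) (q - p)
  rw [sub_sub_sub_cancel_right] at e1 e2 e3
  rw [sub_self, ZMod.val_zero] at e3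
  have b := ZMod.val_lt (s - p)
  unfold Clockwise
  omega

/-- For a diagonal `{p q}` the two sides `{p-1, p}` and `{q-1, q}` span a quadrilateral. -/
lemma clockwise_of_isDiag {p q : ZMod (n + 3)} (h : IsDiag n p q) :
    Clockwise n (p - 1) p (q - 1) q := by
  obtain ⟨h0, h1⟩ := h
  have c1 : (q - p).val ≠ 0 := by
    rw [ne_eq, ZMod.val_eq_zero, sub_eq_zero]
    exact fun e => h0 e.symm
  have c2 : (q - p - 1).val ≠ 0 := by
    rw [ne_eq, ZMod.val_eq_zero]
    exact fun e => h1 (Or.inr (by linear_combination e))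
  have c3 : (q - (p - 1)).val ≠ 0 := by
    rw [ne_eq, ZMod.val_eq_zero]
    exact fun e => h1 (Or.inl (by linear_combination -e))
  have e1 := val_sub_cases (q - p) 1
  have e2 := val_sub_cases (q - (p - 1)) 1
  rw [show q - (p - 1) - 1 = q - p by ring] at e2
  rw [val_one_eq] at e1 e2
  have b1 := ZMod.val_lt (q - p)
  have b2 := ZMod.val_lt (q - (p - 1))
  unfold Clockwise
  rw [show p - (p - 1) = 1 by ring, show q - 1 - (p - 1) = q - p by ring, val_one_eq]
  omega

lemma right_mem_cycInt {k l : ZMod (n + 3)} (h : k ≠ l) : l ∈ cycInt n k l := by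
  have : (l - k).val ≠ 0 := by
    rw [ne_eq, ZMod.val_eq_zero, sub_eq_zero]
    exact fun e => h e.symm
  simp only [cycInt, Finset.mem_filter, Finset.mem_univ, true_and]
  omega

/-- Points of the arcs `(a, b]` and `(c, d]` are never equal or adjacent when `a, b, c, d` are in
clockwise order: `b ≠ c` separates them on one side and `d ≠ a` on the other. -/
lemma isDiag_of_mem {a b c d p q : ZMod (n + 3)} (h : Clockwise n a b c d)
    (hp : p ∈ cycInt n a b) (hq : q ∈ cycInt n c d) : IsDiag n p q := by
  obtain ⟨h1, h2, h3⟩ := h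
  simp only [cycInt, Finset.mem_filter, Finset.mem_univ, true_and] at hp hq
  have bd := ZMod.val_lt (d - a)
  have bq := ZMod.val_lt (q - a)
  have e1 := val_sub_cases (q - a) (c - a)
  have e2 := val_sub_cases (d - a) (c - a)
  rw [sub_sub_sub_cancel_right] at e1 e2
  refine ⟨?_, ?_⟩
  · rintro rfl
    omega
  · rintro (e | e)
    · have e3 := val_sub_cases (p - a) 1
      rw [show p - a - 1 = q - a by rw [e]; ring, val_one_eq] at e3
      omega
    · have e3 := val_sub_cases (q - a) 1
      rw [show q - a - 1 = p - a by rw [e]; ring, val_one_eq] at e3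
      omega

/-! ### Telescoping sums -/

lemma cycInt_eq_image (k l : ZMod (n + 3)) :
    cycInt n k l =
      (Finset.range (l - k).val).image fun t : ℕ => k + ((t + 1 : ℕ) : ZMod (n + 3)) := by
  have b := ZMod.val_lt (l - k)
  ext v
  simp only [cycInt, Finset.mem_filter, Finset.mem_univ, true_and, Finset.mem_image,
    Finset.mem_range]
  constructor
  · rintro ⟨h1, h2⟩
    refine ⟨(v - k).val - 1, by omega, ?_⟩
    rw [Nat.sub_add_cancel h1, ZMod.natCast_zmod_val]
    ring
  · rintro ⟨t, ht, rfl⟩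
    rw [add_sub_cancel_left, ZMod.val_natCast_of_lt (by omega)]
    omega

/-- Telescoping along a cyclic interval. -/
lemma sum_cycInt_sub (f : ZMod (n + 3) → ℝ) (k l : ZMod (n + 3)) :
    ∑ v ∈ cycInt n k l, (f v - f (v - 1)) = f l - f k := by
  have b := ZMod.val_lt (l - k)
  rw [cycInt_eq_image, Finset.sum_image]
  · have h := Finset.sum_range_sub (fun t : ℕ => f (k + (t : ZMod (n + 3)))) (l - k).val
    rw [ZMod.natCast_zmod_val, Nat.cast_zero, add_zero, add_sub_cancel] at h
    rw [← h]
    refine Finset.sum_congr rfl fun t _ => ?_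
    rw [show k + ((t + 1 : ℕ) : ZMod (n + 3)) - 1 = k + t by push_cast; ring]
  · intro s hs t ht hst
    simp only [Finset.coe_range, Set.mem_Iio] at hs ht
    have h := congrArg ZMod.val (add_left_cancel hst)
    rw [ZMod.val_natCast_of_lt (by omega), ZMod.val_natCast_of_lt (by omega)] at h
    omega

/-- The mixed second difference of `x`, as in the definition of the inverse lamination. -/
def secondDiff (x : ZMod (n + 3) → ZMod (n + 3) → ℝ) (p q : ZMod (n + 3)) : ℝ :=
  x (q - 1) (p - 1) + x p q - x p (q - 1) - x (p - 1) q

lemma sum_row (x : TropPt n) (p : ZMod (n + 3)) (c d : ZMod (n + 3)) :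
    ∑ q ∈ cycInt n c d, secondDiff x.x p q =
      (x.x p d - x.x p c) - (x.x (p - 1) d - x.x (p - 1) c) := by
  have h := sum_cycInt_sub (fun v => x.x p v - x.x (p - 1) v) c d
  rw [show (x.x p d - x.x p c) - (x.x (p - 1) d - x.x (p - 1) c) =
    (x.x p d - x.x (p - 1) d) - (x.x p c - x.x (p - 1) c) by ring, ← h]
  refine Finset.sum_congr rfl fun q _ => ?_
  rw [secondDiff, x.symm (q - 1) (p - 1)]
  ring

/-- The sum of the second difference over a rectangle depends only on the four corners. -/
lemma sum_rect (x : TropPt n) (a b c d : ZMod (n + 3)) :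
    ∑ p ∈ cycInt n a b, ∑ q ∈ cycInt n c d, secondDiff x.x p q =
      x.x b d - x.x b c - x.x a d + x.x a c := by
  have h := sum_cycInt_sub (fun v => x.x v d - x.x v c) a b
  rw [show x.x b d - x.x b c - x.x a d + x.x a c =
    (x.x b d - x.x b c) - (x.x a d - x.x a c) by ring, ← h]
  exact Finset.sum_congr rfl fun p _ => sum_row x p c d

/-! ### The lamination axioms -/

lemma secondDiff_symm (x : TropPt n) (p q : ZMod (n + 3)) :
    secondDiff x.x p q = secondDiff x.x q p := by
  rw [secondDiff, secondDiff, x.symm (q - 1) (p - 1), x.symm p q, x.symm p (q - 1),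
    x.symm (p - 1) q]
  ring

lemma secondDiff_self (x : TropPt n) (p : ZMod (n + 3)) : secondDiff x.x p p = 0 := by
  rw [secondDiff, x.diag_zero, x.diag_zero, x.edge_zero p (p - 1) (Or.inl (by ring)),
    x.edge_zero (p - 1) p (Or.inr (by ring))]
  ring

lemma secondDiff_nonneg (x : TropPt n) {p q : ZMod (n + 3)} (h : IsDiag n p q) :
    0 ≤ secondDiff x.x p q := by
  have hp := x.pluecker _ _ _ _ (clockwise_of_isDiag h)
  have := le_max_right (x.x (p - 1) p + x.x (q - 1) q) (x.x p (q - 1) + x.x (p - 1) q)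
  rw [← hp] at this
  rw [secondDiff, x.symm (q - 1) (p - 1)]
  linarith

lemma sum_secondDiff (x : TropPt n) (p : ZMod (n + 3)) : ∑ q, secondDiff x.x p q = 0 := by
  have h := Equiv.sum_comp (Equiv.subRight (1 : ZMod (n + 3)))
    (fun v => x.x p v - x.x (p - 1) v)
  simp only [Equiv.subRight_apply] at h
  rw [← sub_eq_zero.mpr h.symm, ← Finset.sum_sub_distrib]
  refine Finset.sum_congr rfl fun q _ => ?_
  rw [secondDiff, x.symm (q - 1) (p - 1)]
  ring

/-- The far corner of a rectangle of diagonals is bounded by the sum over the rectangle. -/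
lemma secondDiff_le (x : TropPt n) {a b c d : ZMod (n + 3)} (h : Clockwise n a b c d) :
    secondDiff x.x b d ≤ x.x b d - x.x b c - x.x a d + x.x a c := by
  have hab : a ≠ b := by
    rintro rfl
    have := h.1
    simp at this
  have hcd : c ≠ d := by
    rintro rfl
    exact lt_irrefl _ h.2.2
  rw [← sum_rect]
  calc secondDiff x.x b d ≤ ∑ q ∈ cycInt n c d, secondDiff x.x b q :=
        Finset.single_le_sum (f := fun q => secondDiff x.x b q)
          (fun q hq => secondDiff_nonneg x (isDiag_of_mem h (right_mem_cycInt hab) hq))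
          (right_mem_cycInt hcd)
    _ ≤ _ :=
        Finset.single_le_sum (f := fun p => ∑ q ∈ cycInt n c d, secondDiff x.x p q)
          (fun p hp => Finset.sum_nonneg fun q hq =>
            secondDiff_nonneg x (isDiag_of_mem h hp hq))
          (right_mem_cycInt hab)

/-- The two rectangle sums bounding `u_{bd}` and `u_{ac}` cannot both be positive, because the
Plücker maximum for `a, b, c, d` is attained by one of its two terms. -/
lemma secondDiff_noncross (x : TropPt n) {a b c d : ZMod (n + 3)} (h : Clockwise n a b c d)
    (hac : IsDiag n a c) (hbd : IsDiag n b d) :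
    secondDiff x.x a c = 0 ∨ secondDiff x.x b d = 0 := by
  have h1 := secondDiff_le x h
  have h2 := secondDiff_le x (clockwise_rotate h)
  rw [← secondDiff_symm x a c, x.symm c a, x.symm b a] at h2
  have n1 := secondDiff_nonneg x hac
  have n2 := secondDiff_nonneg x hbd
  have hp := x.pluecker _ _ _ _ h
  rcases max_choice (x.x a b + x.x c d) (x.x b c + x.x a d) with e | e
  · rw [e] at hp
    left
    linarith
  · rw [e] at hp
    right
    linarith

/-- Zero row sums turn the sum over `I × Iᶜ` into minus the sum over the square `I × I`. -/
lemma Icyc_secondDiff (x : TropPt n) (k l : ZMod (n + 3)) :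
    (1 / 2) * Icyc n (secondDiff x.x) k l = x.x k l := by
  have h : Icyc n (secondDiff x.x) k l =
      -∑ p ∈ cycInt n k l, ∑ q ∈ cycInt n k l, secondDiff x.x p q := by
    rw [Icyc, ← Finset.sum_neg_distrib]
    refine Finset.sum_congr rfl fun p _ => ?_
    have := Finset.sum_add_sum_compl (cycInt n k l) (fun q => secondDiff x.x p q)
    rw [sum_secondDiff] at this
    linarith
  rw [h, sum_rect, x.diag_zero, x.diag_zero, x.symm l k]
  ring

end Helpers

/-- Given `x ∈ L(ℝ)`, the matrix
`u_{pq} = x_{q−1,p−1} + x_{pq} − x_{p,q−1} − x_{p−1,q}` is an `A`-lamination over `ℝ`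
(symmetric, zero on the diagonal, nonnegative on diagonals of the polygon, crossing
diagonals never both of nonzero weight, zero row sums), and moreover
`(1/2)·I_{kl}(u) = x_{kl}` for every segment `{kl}`. -/
theorem inverse_lamination_of_tropical_point
    (n : ℕ) (hn : 1 ≤ n) (x : TropPt n)
    (u : ZMod (n + 3) → ZMod (n + 3) → ℝ)
    (hu : ∀ p q, u p q =
      x.x (q - 1) (p - 1) + x.x p q - x.x p (q - 1) - x.x (p - 1) q) :
    ∃ G : Lam n, (∀ p q, G.w p q = u p q) ∧
      ∀ k l, k ≠ l → (1 / 2) * Icyc n u k l = x.x k l := by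
  obtain rfl : u = secondDiff x.x := by
    funext p q
    rw [hu, secondDiff]
  refine ⟨{ w := secondDiff x.x
            symm := secondDiff_symm x
            diag_zero := secondDiff_self x
            nonneg := fun i j h => secondDiff_nonneg x h
            noncross := ?_
            balanced := sum_secondDiff x }, fun _ _ => rfl, fun k l _ => Icyc_secondDiff x k l⟩
  rintro i j k l hij hkl (h | h)
  · exact secondDiff_noncross x h hij hkl
  · rw [secondDiff_symm x k l]
    refine secondDiff_noncross x h hij ⟨hkl.1.symm, fun e => hkl.2 e.symm⟩
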